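/- Let n = 2k with k ≥ 1, let c be a positive definite symmetric n×n real matrix and a an arbitrary n×n real matrix. Then there exist a symmetric n×n real matrix x, a matrix g ∈ GL(n,ℝ) with det g > 0, and a tuple λ₁ ≥ λ₂ ≥ ⋯ ≥ λ_{k−1} ≥ |λ_k| (with λ_k possibly negative) such that Ad*(x,g)(c,a) = (1ₙ, H(λ)); moreover the tuple (λ₁,…,λ_k) satisfying λ₁ ≥ ⋯ ≥ λ_{k−1} ≥ |λ_k| for which (1ₙ, H(λ)) lies in the coadjoint orbit of (c,a) is unique. -/

import Mathlib

open Matrix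

/-- The coadjoint action Ad*(x,g)(c,a) = (ǧ c g⁻¹, g a g⁻¹ + x ǧ c g⁻¹),
    where ǧ = (gᵀ)⁻¹. -/
noncomputable def coadjAct {n : ℕ} (x g c a : Matrix (Fin n) (Fin n) ℝ) :
    Matrix (Fin n) (Fin n) ℝ × Matrix (Fin n) (Fin n) ℝ :=
  ((gᵀ)⁻¹ * c * g⁻¹, g * a * g⁻¹ + x * ((gᵀ)⁻¹ * c * g⁻¹))

/-- The n×n skew-symmetric block-diagonal matrix with k consecutive 2×2 blocks
    [[0, λᵢ],[−λᵢ, 0]] (and a final zero block if n > 2k). -/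
def Hmat (n k : ℕ) (lam : Fin k → ℝ) : Matrix (Fin n) (Fin n) ℝ :=
  fun i j =>
    if h1 : (j : ℕ) = (i : ℕ) + 1 ∧ (i : ℕ) % 2 = 0 ∧ (i : ℕ) / 2 < k then
      lam ⟨(i : ℕ) / 2, h1.2.2⟩
    else if h2 : (i : ℕ) = (j : ℕ) + 1 ∧ (j : ℕ) % 2 = 0 ∧ (j : ℕ) / 2 < k then
      -lam ⟨(j : ℕ) / 2, h2.2.2⟩
    else 0

/-- The ordering condition λ₁ ≥ λ₂ ≥ ⋯ ≥ λ_{k−1} ≥ |λ_k| (λ_k possibly negative). -/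
def EvenNormalForm {k : ℕ} (lam : Fin k → ℝ) : Prop :=
  ∀ i j : Fin k, i < j → |lam j| ≤ lam i

/-- The block-diagonal skew-symmetric matrix with blocks `[[0, λᵢ], [-λᵢ, 0]]`, indexed by
pairs (block, position inside the block). -/
def skewBlocks {k : ℕ} (lam : Fin k → ℝ) : Matrix (Fin k × Fin 2) (Fin k × Fin 2) ℝ :=
  fun p q => if p.1 = q.1 then lam p.1 * !![0, 1; -1, 0] p.2 q.2 else 0

lemma mul_skewBlocks_apply {k : ℕ} (lam : Fin k → ℝ)
    (K : Matrix (Fin k × Fin 2) (Fin k × Fin 2) ℝ) (p : Fin k × Fin 2) (j : Fin k) :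
    (K * skewBlocks lam) p (j, 0) = -(K p (j, 1) * lam j) ∧
    (K * skewBlocks lam) p (j, 1) = K p (j, 0) * lam j := by
  constructor <;> simp [Matrix.mul_apply, skewBlocks, Fintype.sum_prod_type, Fin.sum_univ_two]

lemma skewBlocks_mul_apply {k : ℕ} (lam : Fin k → ℝ)
    (K : Matrix (Fin k × Fin 2) (Fin k × Fin 2) ℝ) (i : Fin k) (q : Fin k × Fin 2) :
    (skewBlocks lam * K) (i, 0) q = lam i * K (i, 1) q ∧
    (skewBlocks lam * K) (i, 1) q = -(lam i * K (i, 0) q) := by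
  constructor <;> simp [Matrix.mul_apply, skewBlocks, Fintype.sum_prod_type, Fin.sum_univ_two]

lemma skewBlocks_transpose {k : ℕ} (lam : Fin k → ℝ) :
    (skewBlocks lam)ᵀ = -skewBlocks lam := by
  ext ⟨i, a⟩ ⟨j, b⟩
  by_cases h : i = j
  · subst h
    fin_cases a <;> fin_cases b <;> simp [skewBlocks]
  · simp [skewBlocks, h, Ne.symm h]

lemma skewBlocks_mul_self {k : ℕ} (lam : Fin k → ℝ) :
    skewBlocks lam * skewBlocks lam = diagonal fun p => -lam p.1 ^ 2 := by
  ext p ⟨j, b⟩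
  obtain ⟨i, a⟩ := p
  by_cases h : i = j
  · subst h
    fin_cases a <;> fin_cases b <;>
      simp [mul_skewBlocks_apply] <;> simp [skewBlocks, sq]
  · fin_cases a <;> fin_cases b <;>
      simp [mul_skewBlocks_apply, h] <;> simp [skewBlocks, h]

/-- A matrix commuting with `skewBlocks lam`, where all `lam i` are positive, is the realification
of a complex matrix, hence has nonnegative determinant. -/
lemma det_nonneg_of_commute_skewBlocks {k : ℕ} {lam : Fin k → ℝ} (hpos : ∀ i, 0 < lam i)
    {K : Matrix (Fin k × Fin 2) (Fin k × Fin 2) ℝ}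
    (hK : K * skewBlocks lam = skewBlocks lam * K) : 0 ≤ K.det := by
  have hsq : K * diagonal (fun p : Fin k × Fin 2 => -lam p.1 ^ 2) =
      diagonal (fun p : Fin k × Fin 2 => -lam p.1 ^ 2) * K := by
    rw [← skewBlocks_mul_self, ← Matrix.mul_assoc, hK, Matrix.mul_assoc, hK, Matrix.mul_assoc]
  have hcomm : ∀ p q, K p q * lam q.1 = lam p.1 * K p q := by
    intro p q
    have h := congrFun (congrFun hsq p) q
    rw [mul_diagonal, diagonal_mul] at h
    have h' : (K p q * lam q.1 - lam p.1 * K p q) * (lam q.1 + lam p.1) = 0 := by linarith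
    have hne : lam q.1 + lam p.1 ≠ 0 := (add_pos (hpos _) (hpos _)).ne'
    exact sub_eq_zero.mp ((mul_eq_zero.mp h').resolve_right hne)
  have hdiag : ∀ i j, K (i, 1) (j, 1) = K (i, 0) (j, 0) := by
    intro i j
    have h := congrFun (congrFun hK (i, 0)) (j, 1)
    rw [(mul_skewBlocks_apply ..).2, (skewBlocks_mul_apply ..).1, hcomm] at h
    exact (mul_left_cancel₀ (hpos i).ne' h).symm
  have hoff : ∀ i j, K (i, 0) (j, 1) = -K (i, 1) (j, 0) := by
    intro i j
    have h := congrFun (congrFun hK (i, 0)) (j, 0)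
    rw [(mul_skewBlocks_apply ..).1, (skewBlocks_mul_apply ..).1, hcomm] at h
    have := mul_left_cancel₀ (hpos i).ne' ((mul_neg _ _).trans h)
    linarith
  let Z : Matrix (Fin k) (Fin k) ℂ := fun i j => ⟨K (i, 0) (j, 0), K (i, 1) (j, 0)⟩
  let f : ℂ →+* Matrix (Fin 2) (Fin 2) ℝ :=
    (Algebra.leftMulMatrix Complex.basisOneI : ℂ →ₐ[ℝ] Matrix (Fin 2) (Fin 2) ℝ).toRingHom
  have hf : ∀ z, f z = !![z.re, -z.im; z.im, z.re] := Algebra.leftMulMatrix_complex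
  have hKZ : K = comp _ _ _ _ _ (Z.map f) := by
    ext ⟨i, a⟩ ⟨j, b⟩
    simp only [comp_apply, map_apply, hf]
    fin_cases a <;> fin_cases b <;> simp [Z, hdiag, hoff]
  rw [hKZ, ← det_det Z f, hf, det_fin_two_of]
  nlinarith [sq_nonneg Z.det.re, sq_nonneg Z.det.im]

/-- The diagonal reflection reversing the second basis vector of block `l`. -/
def blockReflection {k : ℕ} (l : Fin k) : Matrix (Fin k × Fin 2) (Fin k × Fin 2) ℝ :=
  diagonal (Function.update 1 (l, 1) (-1))

lemma blockReflection_mul_self {k : ℕ} (l : Fin k) :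
    blockReflection l * blockReflection l = 1 := by
  rw [blockReflection, diagonal_mul_diagonal, ← diagonal_one]
  congr 1
  ext p
  by_cases h : p = (l, 1)
  · subst h; simp
  · simp [Function.update_of_ne h]

lemma blockReflection_transpose {k : ℕ} (l : Fin k) :
    (blockReflection l)ᵀ = blockReflection l :=
  diagonal_transpose _

lemma det_blockReflection {k : ℕ} (l : Fin k) : (blockReflection l).det = -1 := by
  rw [blockReflection, det_diagonal, Finset.prod_update_of_mem (Finset.mem_univ _)]
  simp

lemma blockReflection_conj_skewBlocks {k : ℕ} (l : Fin k) (lam : Fin k → ℝ) :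
    blockReflection l * skewBlocks lam * blockReflection l =
      skewBlocks (Function.update lam l (-lam l)) := by
  ext ⟨i, a⟩ ⟨j, b⟩
  rw [blockReflection, mul_diagonal, diagonal_mul]
  by_cases h : i = j
  · subst h
    by_cases hl : i = l
    · subst hl
      fin_cases a <;> fin_cases b <;> simp [skewBlocks]
    · simp [skewBlocks, hl]
  · simp [skewBlocks, h]

lemma det_nonpos_of_conj_update {k : ℕ} {lam : Fin k → ℝ} (hpos : ∀ i, 0 < lam i) (l : Fin k)
    {G : Matrix (Fin k × Fin 2) (Fin k × Fin 2) ℝ} (hG : G * Gᵀ = 1)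
    (h : skewBlocks (Function.update lam l (-lam l)) = G * skewBlocks lam * Gᵀ) : G.det ≤ 0 := by
  have hG' : Gᵀ * G = 1 := mul_eq_one_comm.mp hG
  have hD := blockReflection_mul_self l
  have key : blockReflection l * G * skewBlocks lam = skewBlocks lam * (blockReflection l * G) := by
    calc blockReflection l * G * skewBlocks lam
        = blockReflection l * (G * skewBlocks lam * Gᵀ) * G := by
          simp only [Matrix.mul_assoc, hG', Matrix.mul_one]
      _ = (blockReflection l * blockReflection l) * skewBlocks lam * (blockReflection l * G) := by
          rw [← h, ← blockReflection_conj_skewBlocks]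
          simp only [Matrix.mul_assoc]
      _ = _ := by rw [hD, Matrix.one_mul]
  have := det_nonneg_of_commute_skewBlocks hpos key
  rw [det_mul, det_blockReflection] at this
  linarith

lemma Antitone.eq_of_map_univ_eq {n : ℕ} {f g : Fin n → ℝ} (hf : Antitone f) (hg : Antitone g)
    (h : Finset.univ.val.map f = Finset.univ.val.map g) : f = g := by
  apply List.ofFn_injective
  refine List.Perm.eq_of_pairwise' (hf.sortedGE_ofFn.pairwise) (hg.sortedGE_ofFn.pairwise) ?_
  rw [← Multiset.coe_eq_coe]
  simpa [Fin.univ_val_map] using h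

lemma sq_eq_sq_of_conj {k : ℕ} {lam lam' : Fin k → ℝ}
    (hl : EvenNormalForm lam) (hl' : EvenNormalForm lam')
    {G : Matrix (Fin k × Fin 2) (Fin k × Fin 2) ℝ} (hG : G * Gᵀ = 1)
    (h : skewBlocks lam' = G * skewBlocks lam * Gᵀ) (i : Fin k) : lam i ^ 2 = lam' i ^ 2 := by
  have anti : ∀ {μ : Fin k → ℝ}, EvenNormalForm μ → Antitone fun i => μ i ^ 2 := by
    intro μ hμ
    refine antitone_iff_forall_lt.mpr fun i j hij => ?_
    exact sq_le_sq' (by linarith [hμ i j hij, neg_abs_le (μ j)])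
      ((le_abs_self _).trans (hμ i j hij))
  have hG' : Gᵀ * G = 1 := mul_eq_one_comm.mp hG
  have hdiag : diagonal (fun p : Fin k × Fin 2 => lam' p.1 ^ 2) =
      G * diagonal (fun p : Fin k × Fin 2 => lam p.1 ^ 2) * Gᵀ := by
    have e : ∀ μ : Fin k → ℝ, diagonal (fun p : Fin k × Fin 2 => μ p.1 ^ 2) =
        -(skewBlocks μ * skewBlocks μ) := by
      intro μ
      rw [skewBlocks_mul_self, diagonal_neg]
      simp
    rw [e, e, h]
    calc -(G * skewBlocks lam * Gᵀ * (G * skewBlocks lam * Gᵀ))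
        = -(G * skewBlocks lam * (Gᵀ * G) * skewBlocks lam * Gᵀ) := by
          simp only [Matrix.mul_assoc]
      _ = _ := by rw [hG']; simp [Matrix.mul_assoc]
  have hchar := congrArg Matrix.charpoly hdiag
  rw [charpoly_mul_comm, ← Matrix.mul_assoc, hG', Matrix.one_mul, charpoly_diagonal,
    charpoly_diagonal, Fintype.prod_prod_type, Fintype.prod_prod_type] at hchar
  have hroots := congrArg Polynomial.roots hchar
  simp only [Finset.prod_const, Finset.card_univ, Fintype.card_fin, Finset.prod_pow,
    Polynomial.roots_pow] at hroots
  have hr : ∀ d : Fin k → ℝ,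
      (∏ i, (Polynomial.X - Polynomial.C (d i))).roots = Finset.univ.val.map d := by
    intro d
    rw [← Polynomial.roots_multiset_prod_X_sub_C (Finset.univ.val.map d), Multiset.map_map]
    rfl
  rw [hr, hr] at hroots
  have hmap : Finset.univ.val.map (fun i => lam i ^ 2) =
      Finset.univ.val.map (fun i => lam' i ^ 2) := by
    ext x
    have := congrArg (Multiset.count x) hroots
    simp only [Multiset.count_nsmul] at this
    omega
  exact congrFun ((anti hl).eq_of_map_univ_eq (anti hl') hmap) i

lemma EvenNormalForm.eq_of_conj {k : ℕ} {lam lam' : Fin k → ℝ}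
    (hl : EvenNormalForm lam) (hl' : EvenNormalForm lam')
    {G : Matrix (Fin k × Fin 2) (Fin k × Fin 2) ℝ} (hG : G * Gᵀ = 1) (hdet : 0 < G.det)
    (h : skewBlocks lam' = G * skewBlocks lam * Gᵀ) : lam = lam' := by
  have hsq := sq_eq_sq_of_conj hl hl' hG h
  by_contra hne
  obtain ⟨l, hlne⟩ := Function.ne_iff.mp hne
  have hneg : lam l = -lam' l := (sq_eq_sq_iff_eq_or_eq_neg.mp (hsq l)).resolve_left hlne
  have hlast : ∀ i, i ≠ l → i < l := by
    intro i hi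
    by_contra hlt
    have hli : l < i := lt_of_le_of_ne (not_lt.mp hlt) (Ne.symm hi)
    have h1 := (abs_nonneg _).trans (hl l i hli)
    have h2 := (abs_nonneg _).trans (hl' l i hli)
    exact hlne (by linarith)
  have hupd : lam' = Function.update lam l (-lam l) := by
    ext i
    by_cases hi : i = l
    · subst hi; simp [hneg]
    · rw [Function.update_of_ne hi]
      have h1 := (abs_nonneg _).trans (hl i l (hlast i hi))
      have h2 := (abs_nonneg _).trans (hl' i l (hlast i hi))
      exact ((sq_eq_sq₀ h1 h2).mp (hsq i)).symm
  have hupd' : lam = Function.update lam' l (-lam' l) := by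
    simp [hupd]
  have pos : ∀ {μ : Fin k → ℝ}, EvenNormalForm μ → 0 < μ l → ∀ i, 0 < μ i := by
    intro μ hμ h0 i
    by_cases hi : i = l
    · rwa [hi]
    · exact (abs_pos.mpr h0.ne').trans_le (hμ i l (hlast i hi))
  have hG' : Gᵀ * G = 1 := mul_eq_one_comm.mp hG
  rcases lt_trichotomy (lam l) 0 with h0 | h0 | h0
  · have hback : skewBlocks lam = Gᵀ * skewBlocks lam' * Gᵀᵀ := by
      rw [h, transpose_transpose]
      calc skewBlocks lam = (Gᵀ * G) * skewBlocks lam * (Gᵀ * G) := by simp [hG']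
        _ = _ := by simp only [Matrix.mul_assoc]
    have := det_nonpos_of_conj_update (pos hl' (by linarith)) l (G := Gᵀ)
      (by rw [transpose_transpose, hG']) (hupd' ▸ hback)
    rw [det_transpose] at this
    linarith
  · exact hlne (by linarith)
  · have := det_nonpos_of_conj_update (pos hl h0) l hG (hupd ▸ h)
    linarith

open scoped InnerProductSpace in
/-- A skew-adjoint operator on an invariant subspace of dimension at least two has an orthonormal
pair spanning an invariant plane. -/
lemma exists_invariant_plane {V : Type*} [NormedAddCommGroup V] [InnerProductSpace ℝ V]
    [FiniteDimensional ℝ V] {T : V →ₗ[ℝ] V} (hT : ∀ x y, ⟪T x, y⟫_ℝ = -⟪x, T y⟫_ℝ)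
    {W : Submodule ℝ V} (hW : ∀ x ∈ W, T x ∈ W) (hdim : 2 ≤ Module.finrank ℝ W) :
    ∃ v ∈ W, ∃ w ∈ W, ∃ μ : ℝ, 0 ≤ μ ∧ ‖v‖ = 1 ∧ ‖w‖ = 1 ∧ ⟪v, w⟫_ℝ = 0 ∧
      T v = -μ • w ∧ T w = μ • v := by
  let S : W →ₗ[ℝ] W := T.restrict hW
  have hS : (S ∘ₗ S).IsSymmetric := by
    intro x y
    change ⟪T (T x), (y : V)⟫_ℝ = ⟪(x : V), T (T y)⟫_ℝ
    rw [hT, hT, neg_neg]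
  let b := hS.eigenvectorBasis rfl
  have hnorm : ∀ i, ‖(b i : V)‖ = 1 := b.orthonormal.1
  by_cases hzero : ∀ i, T (b i : V) = 0
  · refine ⟨b ⟨0, by omega⟩, (b _).2, b ⟨1, by omega⟩, (b _).2, 0, le_rfl, hnorm _, hnorm _,
      ?_, by simp [hzero], by simp [hzero]⟩
    exact b.orthonormal.2 (i := ⟨0, by omega⟩) (j := ⟨1, by omega⟩) (by simp)
  · push Not at hzero
    obtain ⟨i, hi⟩ := hzero
    set v : V := (b i : V)
    have heig : T (T v) = hS.eigenvalues rfl i • v :=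
      congrArg (Subtype.val : W → V) (hS.apply_eigenvectorBasis rfl i)
    set e := hS.eigenvalues rfl i
    have hvn : ‖v‖ = 1 := hnorm i
    have he : e = -⟪T v, T v⟫_ℝ := by
      rw [hT, neg_neg, heig, inner_smul_right, real_inner_self_eq_norm_sq, hvn]; simp
    have hpos : 0 < ‖T v‖ := norm_pos_iff.mpr hi
    rw [real_inner_self_eq_norm_sq] at he
    refine ⟨v, (b i).2, (-‖T v‖⁻¹) • T v, W.smul_mem _ (hW _ (b i).2), ‖T v‖, hpos.le, hvn,
      ?_, ?_, ?_, ?_⟩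
    · rw [norm_smul, norm_neg, norm_inv, norm_norm, inv_mul_cancel₀ hpos.ne']
    · have h0 := hT v v
      rw [real_inner_comm] at h0
      rw [inner_smul_right, show ⟪v, T v⟫_ℝ = 0 by linarith, mul_zero]
    · rw [smul_smul, neg_mul_neg, mul_inv_cancel₀ hpos.ne', one_smul]
    · rw [map_smul, heig, smul_smul, he]
      congr 1
      field_simp

open scoped InnerProductSpace in
lemma exists_orthonormal_skew_blocks {V : Type*} [NormedAddCommGroup V] [InnerProductSpace ℝ V]
    [FiniteDimensional ℝ V] {T : V →ₗ[ℝ] V} (hT : ∀ x y, ⟪T x, y⟫_ℝ = -⟪x, T y⟫_ℝ) (k : ℕ)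
    (W : Submodule ℝ V) (hW : ∀ x ∈ W, T x ∈ W) (hdim : Module.finrank ℝ W = 2 * k) :
    ∃ (u : Fin k → Fin 2 → V) (lam : Fin k → ℝ), (∀ i a, u i a ∈ W) ∧ (∀ i, 0 ≤ lam i) ∧
      (∀ i j a b, ⟪u i a, u j b⟫_ℝ = if i = j ∧ a = b then 1 else 0) ∧
      ∀ i, T (u i 0) = -lam i • u i 1 ∧ T (u i 1) = lam i • u i 0 := by
  induction k generalizing W with
  | zero => exact ⟨fun i => i.elim0, fun i => i.elim0, fun i => i.elim0, fun i => i.elim0,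
      fun i => i.elim0, fun i => i.elim0⟩
  | succ k ih =>
    obtain ⟨v, hvW, w, hwW, μ, hμ, hvv, hww, hvw, hTv, hTw⟩ :=
      exists_invariant_plane hT hW (by omega)
    have hwv : ⟪w, v⟫_ℝ = 0 := by rw [real_inner_comm, hvw]
    have hon : Orthonormal ℝ ![v, w] := by
      rw [orthonormal_iff_ite]
      intro i j
      fin_cases i <;> fin_cases j <;> simp [hvv, hww, hvw, hwv]
    let P := Submodule.span ℝ (Set.range ![v, w])
    have hP : ∀ x, x ∈ Pᗮ ↔ ⟪v, x⟫_ℝ = 0 ∧ ⟪w, x⟫_ℝ = 0 := by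
      intro x
      rw [Submodule.mem_orthogonal]
      refine ⟨fun h => ⟨h v (Submodule.subset_span ⟨0, rfl⟩),
        h w (Submodule.subset_span ⟨1, rfl⟩)⟩, fun h y hy => ?_⟩
      induction hy using Submodule.span_induction with
      | mem y hy =>
        obtain ⟨i, rfl⟩ := hy
        fin_cases i
        · exact h.1
        · exact h.2
      | zero => simp
      | add y z _ _ hy hz => rw [inner_add_left, hy, hz, add_zero]
      | smul c y _ hy => rw [inner_smul_left, hy, mul_zero]
    have hPdim : Module.finrank ℝ P = 2 := by
      simpa using finrank_span_eq_card hon.linearIndependent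
    have hPW : P ≤ W := by
      rw [Submodule.span_le]
      rintro _ ⟨i, rfl⟩
      fin_cases i
      · exact hvW
      · exact hwW
    obtain ⟨u, lam, huW, hlam, hu, hTu⟩ := ih (Pᗮ ⊓ W)
      (fun x hx => ⟨by
        obtain ⟨h1, h2⟩ := (hP x).mp hx.1
        rw [SetLike.mem_coe, hP, ← neg_eq_zero, ← hT, ← neg_eq_zero (a := ⟪w, T x⟫_ℝ), ← hT, hTv, hTw,
          inner_smul_left, inner_smul_left, h1, h2]
        simp, hW x hx.2⟩)
      (Submodule.finrank_add_inf_finrank_orthogonal' hPW (by omega))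
    have hperp : ∀ i a, ⟪v, u i a⟫_ℝ = 0 ∧ ⟪w, u i a⟫_ℝ = 0 := fun i a => (hP _).mp (huW i a).1
    have hperp' : ∀ i a, ⟪u i a, v⟫_ℝ = 0 ∧ ⟪u i a, w⟫_ℝ = 0 := fun i a => by
      rw [real_inner_comm, real_inner_comm w]
      exact hperp i a
    refine ⟨Fin.cons ![v, w] u, Fin.cons μ lam, ?_, ?_, ?_, ?_⟩
    · intro i a
      cases i using Fin.cases with
      | zero => fin_cases a <;> simp [hvW, hwW]
      | succ i => exact (huW i a).2
    · intro i
      cases i using Fin.cases with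
      | zero => exact hμ
      | succ i => exact hlam i
    · intro i j a b
      cases i using Fin.cases with
      | zero =>
        cases j using Fin.cases with
        | zero => fin_cases a <;> fin_cases b <;> simp [hvv, hww, hvw, hwv]
        | succ j => fin_cases a <;> simp [hperp, (Fin.succ_ne_zero j).symm]
      | succ i =>
        cases j using Fin.cases with
        | zero => fin_cases b <;> simp [hperp']
        | succ j => simp [hu]
    · intro i
      cases i using Fin.cases with
      | zero => simp [hTv, hTw]
      | succ i => simpa using hTu i

open scoped InnerProductSpace in
lemma exists_orthogonal_conj_skewBlocks {k : ℕ} {A : Matrix (Fin k × Fin 2) (Fin k × Fin 2) ℝ}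
    (hA : Aᵀ = -A) : ∃ (Q : Matrix (Fin k × Fin 2) (Fin k × Fin 2) ℝ) (lam : Fin k → ℝ),
      Q * Qᵀ = 1 ∧ (∀ i, 0 ≤ lam i) ∧ Antitone lam ∧ Q * A * Qᵀ = skewBlocks lam := by
  let T := Matrix.toEuclideanLin A
  have inner_eq : ∀ x y : EuclideanSpace ℝ (Fin k × Fin 2), ⟪x, y⟫_ℝ = x.ofLp ⬝ᵥ y.ofLp := by
    intro x y
    rw [EuclideanSpace.inner_eq_star_dotProduct, star_trivial, dotProduct_comm]
  have T_ofLp : ∀ x, (T x).ofLp = A *ᵥ x.ofLp := fun x => rfl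
  have hT : ∀ x y, ⟪T x, y⟫_ℝ = -⟪x, T y⟫_ℝ := by
    intro x y
    rw [inner_eq, inner_eq, T_ofLp, T_ofLp, dotProduct_comm, dotProduct_mulVec,
      ← mulVec_transpose, hA, neg_mulVec, neg_dotProduct, dotProduct_comm]
  obtain ⟨u, lam, -, hlam, hu, hTu⟩ := exists_orthonormal_skew_blocks hT k ⊤
    (fun _ _ => Submodule.mem_top) (by simp [mul_comm])
  let σ := Tuple.sort (-lam)
  refine ⟨of fun p => (u (σ p.1) p.2).ofLp, lam ∘ σ, ?_, fun i => hlam _, ?_, ?_⟩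
  · ext p q
    change (u (σ p.1) p.2).ofLp ⬝ᵥ (u (σ q.1) q.2).ofLp = _
    rw [← inner_eq, hu, one_apply]
    simp [Prod.ext_iff]
  · intro i j hij
    have := Tuple.monotone_sort (-lam) hij
    simpa using this
  · ext p ⟨j, b⟩
    rw [Matrix.mul_assoc]
    change (u (σ p.1) p.2).ofLp ⬝ᵥ (A *ᵥ (u (σ j) b).ofLp) = _
    rw [← T_ofLp, ← inner_eq]
    obtain ⟨i, a⟩ := p
    by_cases h : i = j
    · subst h
      fin_cases a <;> fin_cases b <;>
        simp [hTu, inner_smul_right, hu, skewBlocks, -inner_self_eq_norm_sq_to_K]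
    · fin_cases b <;> simp [hTu, inner_smul_right, hu, skewBlocks, h]

lemma exists_orthogonal_conj_evenNormalForm {k : ℕ} (hk : 1 ≤ k)
    {A : Matrix (Fin k × Fin 2) (Fin k × Fin 2) ℝ} (hA : Aᵀ = -A) {s : ℝ} (hs : s ≠ 0) :
    ∃ (Q : Matrix (Fin k × Fin 2) (Fin k × Fin 2) ℝ) (lam : Fin k → ℝ),
      Q * Qᵀ = 1 ∧ 0 < Q.det * s ∧ EvenNormalForm lam ∧ Q * A * Qᵀ = skewBlocks lam := by
  obtain ⟨Q, lam, hQ, hlam, hanti, hconj⟩ := exists_orthogonal_conj_skewBlocks hA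
  have hdet : Q.det * s ≠ 0 := by
    refine mul_ne_zero (fun h => ?_) hs
    have := congrArg Matrix.det hQ
    simp [h] at this
  rcases hdet.lt_or_gt with hneg | hpos
  · let l : Fin k := ⟨k - 1, by omega⟩
    refine ⟨blockReflection l * Q, Function.update lam l (-lam l), ?_, ?_, ?_, ?_⟩
    · rw [transpose_mul, blockReflection_transpose]
      calc blockReflection l * Q * (Qᵀ * blockReflection l)
          = blockReflection l * (Q * Qᵀ) * blockReflection l := by simp only [Matrix.mul_assoc]
        _ = 1 := by rw [hQ, Matrix.mul_one, blockReflection_mul_self]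
    · rw [det_mul, det_blockReflection]
      linarith
    · intro i j hij
      have hi : i ≠ l := by
        rintro rfl
        have := Fin.lt_def.mp hij
        have := j.isLt
        simp only [l] at *
        omega
      rw [Function.update_of_ne hi]
      have : |Function.update lam l (-lam l) j| = lam j := by
        by_cases hj : j = l
        · subst hj; simp [abs_of_nonneg (hlam _)]
        · rw [Function.update_of_ne hj, abs_of_nonneg (hlam _)]
      rw [this]
      exact hanti hij.le
    · rw [← blockReflection_conj_skewBlocks, ← hconj, transpose_mul, blockReflection_transpose]
      simp only [Matrix.mul_assoc]
  · exact ⟨Q, lam, hQ, hpos, fun i j hij => by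
      rw [abs_of_nonneg (hlam j)]; exact hanti hij.le, hconj⟩

/-- Splitting an index `i < 2 * k` into its block `i / 2` and its position `i % 2`. -/
def blockEquiv (k : ℕ) : Fin (2 * k) ≃ Fin k × Fin 2 :=
  (finCongr (mul_comm 2 k)).trans finProdFinEquiv.symm

lemma Hmat_eq_submatrix {k : ℕ} (lam : Fin k → ℝ) :
    Hmat (2 * k) k lam = (skewBlocks lam).submatrix (blockEquiv k) (blockEquiv k) := by
  have hval : ∀ p, ((blockEquiv k).symm p : ℕ) = p.2 + 2 * p.1 := fun p => rfl
  ext i j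
  obtain ⟨⟨i, a⟩, rfl⟩ := (blockEquiv k).symm.surjective i
  obtain ⟨⟨j, b⟩, rfl⟩ := (blockEquiv k).symm.surjective j
  simp only [Hmat, submatrix_apply, Equiv.apply_symm_apply, skewBlocks, hval]
  by_cases h : i = j
  · subst h
    fin_cases a <;> fin_cases b <;> simp [add_comm]
  · have h' : (i : ℕ) ≠ j := fun e => h (Fin.ext e)
    rw [dif_neg (by have := a.isLt; have := b.isLt; omega),
      dif_neg (by have := a.isLt; have := b.isLt; omega), if_neg h]

lemma coadjAct_eq_one_iff {n : ℕ} {x g c a H : Matrix (Fin n) (Fin n) ℝ} (hg : IsUnit g.det) :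
    coadjAct x g c a = (1, H) ↔ c = gᵀ * g ∧ H = g * a * g⁻¹ + x := by
  have hgT : IsUnit gᵀ.det := by rwa [det_transpose]
  have hfst : (gᵀ)⁻¹ * c * g⁻¹ = 1 ↔ c = gᵀ * g := by
    constructor
    · intro h
      calc c = gᵀ * ((gᵀ)⁻¹ * c * g⁻¹) * g := by
            rw [Matrix.mul_assoc (gᵀ)⁻¹, mul_nonsing_inv_cancel_left _ _ hgT,
              nonsing_inv_mul_cancel_right _ _ hg]
        _ = gᵀ * g := by rw [h, Matrix.mul_one]
    · rintro rfl
      rw [nonsing_inv_mul_cancel_left _ _ hgT, mul_nonsing_inv _ hg]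
  rw [coadjAct, Prod.mk.injEq, ← hfst]
  refine and_congr_right fun h => ?_
  rw [h, Matrix.mul_one, eq_comm]

open scoped MatrixOrder Matrix.Norms.L2Operator in
lemma Matrix.PosDef.exists_eq_transpose_mul_self {n : ℕ} {c : Matrix (Fin n) (Fin n) ℝ}
    (hc : c.PosDef) : ∃ B : Matrix (Fin n) (Fin n) ℝ, IsUnit B.det ∧ c = Bᵀ * B := by
  obtain ⟨B, hB, rfl⟩ :=
    CStarAlgebra.isStrictlyPositive_iff_eq_star_mul_self.mp hc.isStrictlyPositive
  exact ⟨B, (isUnit_iff_isUnit_det B).mp hB, by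
    rw [star_eq_conjTranspose, conjTranspose_eq_transpose_of_trivial]⟩

lemma exists_coadjAct_eq_Hmat {k : ℕ} (hk : 1 ≤ k)
    {c : Matrix (Fin (2 * k)) (Fin (2 * k)) ℝ} (a : Matrix (Fin (2 * k)) (Fin (2 * k)) ℝ)
    (hc : c.PosDef) :
    ∃ (x g : Matrix (Fin (2 * k)) (Fin (2 * k)) ℝ) (lam : Fin k → ℝ),
      x.IsSymm ∧ 0 < g.det ∧ EvenNormalForm lam ∧
      coadjAct x g c a = (1, Hmat (2 * k) k lam) := by
  obtain ⟨B, hB, rfl⟩ := hc.exists_eq_transpose_mul_self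
  let e := blockEquiv k
  let b := B * a * B⁻¹
  let A := (1 / 2 : ℝ) • (b - bᵀ)
  have hA : (A.submatrix e.symm e.symm)ᵀ = -A.submatrix e.symm e.symm := by
    ext p q
    simp only [A, transpose_apply, submatrix_apply, Matrix.smul_apply, Matrix.sub_apply, Matrix.neg_apply, smul_eq_mul]
    ring
  obtain ⟨Q', lam, hQ', hdet, hlam, hconj⟩ :=
    exists_orthogonal_conj_evenNormalForm hk hA hB.ne_zero
  let Q := Q'.submatrix e e
  have hQ : Q * Qᵀ = 1 := by
    rw [transpose_submatrix, submatrix_mul_equiv, hQ', submatrix_one_equiv]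
  have hQA : Q * A * Qᵀ = Hmat (2 * k) k lam := by
    rw [Hmat_eq_submatrix, ← hconj]
    have : A = (A.submatrix e.symm e.symm).submatrix e e := by simp
    rw [this, transpose_submatrix, submatrix_mul_equiv, submatrix_mul_equiv]
    simp [e]
  have hgdet : 0 < (Q * B).det := by rwa [det_mul, det_submatrix_equiv_self]
  refine ⟨-(Q * ((1 / 2 : ℝ) • (b + bᵀ)) * Qᵀ), Q * B, lam, ?_, hgdet, hlam, ?_⟩
  · simp [IsSymm, Matrix.mul_assoc, add_comm]
  · rw [coadjAct_eq_one_iff hgdet.ne'.isUnit]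
    constructor
    · calc Bᵀ * B = Bᵀ * (Qᵀ * Q) * B := by rw [mul_eq_one_comm.mp hQ, Matrix.mul_one]
        _ = _ := by simp only [transpose_mul, Matrix.mul_assoc]
    · have hinv : Q⁻¹ = Qᵀ := inv_eq_right_inv hQ
      have hg : Q * B * a * (Q * B)⁻¹ = Q * b * Qᵀ := by
        rw [Matrix.mul_inv_rev, hinv]
        simp only [b, Matrix.mul_assoc]
      rw [hg, ← hQA, ← sub_eq_add_neg, ← Matrix.sub_mul, ← Matrix.mul_sub]
      congr 2
      ext i j
      simp only [A, transpose_apply, Matrix.smul_apply, Matrix.sub_apply, Matrix.add_apply, smul_eq_mul]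
      ring

lemma EvenNormalForm.eq_of_coadjAct_eq {k : ℕ} {c a : Matrix (Fin (2 * k)) (Fin (2 * k)) ℝ}
    {lam lam' : Fin k → ℝ} (hl : EvenNormalForm lam) (hl' : EvenNormalForm lam')
    {x g x' g' : Matrix (Fin (2 * k)) (Fin (2 * k)) ℝ}
    (hx : x.IsSymm) (hg : 0 < g.det) (h : coadjAct x g c a = (1, Hmat (2 * k) k lam))
    (hx' : x'.IsSymm) (hg' : 0 < g'.det)
    (h' : coadjAct x' g' c a = (1, Hmat (2 * k) k lam')) : lam = lam' := by
  have hu := hg.ne'.isUnit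
  have hu' := hg'.ne'.isUnit
  obtain ⟨hc, hH⟩ := (coadjAct_eq_one_iff hu).mp h
  obtain ⟨hc', hH'⟩ := (coadjAct_eq_one_iff hu').mp h'
  have hskew : ∀ μ : Fin k → ℝ, (Hmat (2 * k) k μ)ᵀ = -Hmat (2 * k) k μ := by
    intro μ
    rw [Hmat_eq_submatrix, transpose_submatrix, skewBlocks_transpose]
    rfl
  let G := g' * g⁻¹
  have hG : G * Gᵀ = 1 := by
    rw [mul_eq_one_comm, transpose_mul]
    calc (g⁻¹)ᵀ * g'ᵀ * (g' * g⁻¹) = (g⁻¹)ᵀ * (g'ᵀ * g') * g⁻¹ := by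
          simp only [Matrix.mul_assoc]
      _ = (g * g⁻¹)ᵀ * (g * g⁻¹) := by
          rw [← hc', hc, transpose_mul]
          simp only [Matrix.mul_assoc]
      _ = 1 := by rw [mul_nonsing_inv _ hu]; simp
  have hGdet : 0 < G.det := by
    rw [det_mul, det_nonsing_inv, Ring.inverse_eq_inv']
    positivity
  have hGT : Gᵀ = g * g'⁻¹ := by
    rw [← inv_eq_right_inv hG, Matrix.mul_inv_rev, nonsing_inv_nonsing_inv _ hu]
  have hdiff : Hmat (2 * k) k lam' - G * Hmat (2 * k) k lam * Gᵀ = x' - G * x * Gᵀ := by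
    have : G * (g * a * g⁻¹) * Gᵀ = g' * a * g'⁻¹ := by
      calc G * (g * a * g⁻¹) * Gᵀ = g' * (g⁻¹ * g) * a * (g⁻¹ * g) * g'⁻¹ := by
            rw [hGT]; simp only [G, Matrix.mul_assoc]
        _ = _ := by rw [nonsing_inv_mul _ hu]; simp
    rw [hH, hH', Matrix.mul_add, Matrix.add_mul, this]
    abel
  have hzero : Hmat (2 * k) k lam' - G * Hmat (2 * k) k lam * Gᵀ = 0 := by
    have h1 : (Hmat (2 * k) k lam' - G * Hmat (2 * k) k lam * Gᵀ)ᵀ =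
        -(Hmat (2 * k) k lam' - G * Hmat (2 * k) k lam * Gᵀ) := by
      simp only [transpose_sub, transpose_mul, transpose_transpose, hskew, Matrix.neg_mul,
        Matrix.mul_neg, Matrix.mul_assoc]
      abel
    have h2 : (x' - G * x * Gᵀ)ᵀ = x' - G * x * Gᵀ := by
      simp only [transpose_sub, transpose_mul, transpose_transpose, hx.eq, hx'.eq,
        Matrix.mul_assoc]
    rw [← hdiff, h1] at h2
    ext i j
    have := congrFun (congrFun h2 i) j
    simp only [Matrix.neg_apply] at this
    simp only [Matrix.zero_apply]
    linarith
  let e := blockEquiv k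
  refine hl.eq_of_conj hl' (G := G.submatrix e.symm e.symm) ?_ ?_ ?_
  · rw [transpose_submatrix, submatrix_mul_equiv, hG, submatrix_one_equiv]
  · rwa [det_submatrix_equiv_self]
  · have hs : ∀ μ, skewBlocks μ = (Hmat (2 * k) k μ).submatrix e.symm e.symm := by
      intro μ
      rw [Hmat_eq_submatrix]
      simp [e]
    rw [hs, hs, transpose_submatrix, submatrix_mul_equiv, submatrix_mul_equiv,
      sub_eq_zero.mp hzero]

theorem orbit_normal_form_even (k : ℕ) (hk : 1 ≤ k)
    (c a : Matrix (Fin (2 * k)) (Fin (2 * k)) ℝ) (hc : c.PosDef) :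
    (∃ (x g : Matrix (Fin (2 * k)) (Fin (2 * k)) ℝ) (lam : Fin k → ℝ),
      x.IsSymm ∧ 0 < g.det ∧ EvenNormalForm lam ∧
      coadjAct x g c a = (1, Hmat (2 * k) k lam)) ∧
    (∀ lam lam' : Fin k → ℝ,
      EvenNormalForm lam → EvenNormalForm lam' →
      (∃ x g : Matrix (Fin (2 * k)) (Fin (2 * k)) ℝ,
        x.IsSymm ∧ 0 < g.det ∧ coadjAct x g c a = (1, Hmat (2 * k) k lam)) →
      (∃ x g : Matrix (Fin (2 * k)) (Fin (2 * k)) ℝ,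
        x.IsSymm ∧ 0 < g.det ∧ coadjAct x g c a = (1, Hmat (2 * k) k lam')) →
      lam = lam') := by
  refine ⟨exists_coadjAct_eq_Hmat hk a hc, ?_⟩
  rintro lam lam' hl hl' ⟨x, g, hx, hg, h⟩ ⟨x', g', hx', hg', h'⟩
  exact hl.eq_of_coadjAct_eq hl' hx hg h hx' hg' h'
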